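/- Let γ: ℝ/ℤ → ℝ³ be a smooth injective closed curve parametrized by arc length (|γ′| ≡ 1, total length 1), let v: ℝ³ → ℝ⁵ be the light-cone lift v(p) = ((1+|p|²)/2, p, (1−|p|²)/2), and for x ≠ y define s(x,y) = v(γ(x)) ∧ v(γ(y)) / √(B₂(v(γ(x))∧v(γ(y)), v(γ(x))∧v(γ(y)))) ∈ ⋀²ℝ⁵. Then O'Hara's energy satisfies E∘(γ) := −4 + ∬_{(ℝ/ℤ)²} ( 1/|γ(x)−γ(y)|² − 1/d(x,y)² ) dx dy = ∬_{(ℝ/ℤ)²} ( 1/|γ(x)−γ(y)|² − (1/2)·B₂( ∂s/∂x, ∂s/∂y ) ) dx dy, and the integrand on the right-hand side is nonnegative and integrable. (This combines the cosine formula E∘ = ∬(|Ω|−Re Ω) with the identification Re Ω = (1/2)⟨s_x,s_y⟩ dx∧dy of the real part of the infinitesimal cross ratio with half the signed area form.) -/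

import Mathlib

open MeasureTheory

noncomputable section

/-- ℝ³ with the Euclidean norm. -/
abbrev E3 := EuclideanSpace ℝ (Fin 3)

/-- The arc-length distance on ℝ/ℤ, written for parameters `s, t ∈ [0,1]`. -/
def arcd (s t : ℝ) : ℝ := min |s - t| (1 - |s - t|)

/-- The Minkowski bilinear form `B(x,y) = −x₀y₀ + Σ_{i=1}^{4} x_i y_i` on `ℝ⁵`. -/
def B5 (x y : Fin 5 → ℝ) : ℝ := (∑ i, x i * y i) - 2 * x 0 * y 0

/-- The Lorentz signature vector `η = (−1,1,1,1,1)`. -/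
def lsgn : Fin 5 → ℝ := fun i => if i = 0 then -1 else 1

/-- The wedge `a ∧ b ∈ ⋀²ℝ⁵`, realized as the antisymmetric array
`(a ∧ b)_{ij} = a_i b_j − a_j b_i`. -/
def wedge2 (a b : Fin 5 → ℝ) : Fin 5 → Fin 5 → ℝ := fun i j => a i * b j - a j * b i

/-- The bilinear form induced by `B` on `⋀²ℝ⁵`: on decomposables it satisfies
`B₂(a∧b, c∧d) = −(B(a,c)B(b,d) − B(a,d)B(b,c))`. -/
def B2 (M N : Fin 5 → Fin 5 → ℝ) : ℝ :=
  -(1 / 2) * ∑ i, ∑ j, lsgn i * lsgn j * M i j * N i j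

/-- The light-cone lift `v(p) = ((1+|p|²)/2, p, (1−|p|²)/2)` of a point of ℝ³. -/
def lcLift (p : E3) : Fin 5 → ℝ :=
  ![(1 + ‖p‖ ^ 2) / 2, p 0, p 1, p 2, (1 - ‖p‖ ^ 2) / 2]

/-- The normalized wedge `s(x,y)` of the light-cone lifts of two points of the knot. -/
def nwedge (γ : ℝ → E3) (x y : ℝ) : Fin 5 → Fin 5 → ℝ :=
  (Real.sqrt (B2 (wedge2 (lcLift (γ x)) (lcLift (γ y)))
      (wedge2 (lcLift (γ x)) (lcLift (γ y)))))⁻¹ •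
    wedge2 (lcLift (γ x)) (lcLift (γ y))

/-- derivative of the lift -/
def dLift (p q : E3) : Fin 5 → ℝ := ![inner ℝ p q, q 0, q 1, q 2, -inner ℝ p q]

/-- real part of the infinitesimal cross ratio -/
def Kf (γ : ℝ → E3) (x y : ℝ) : ℝ :=
  2 * inner ℝ (γ x - γ y) (deriv γ x) * inner ℝ (γ x - γ y) (deriv γ y) / ‖γ x - γ y‖ ^ 4
    - inner ℝ (deriv γ x) (deriv γ y) / ‖γ x - γ y‖ ^ 2

lemma B2_wedge (a b c d : Fin 5 → ℝ) :
    B2 (wedge2 a b) (wedge2 c d) = -(B5 a c * B5 b d - B5 a d * B5 b c) := by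
  simp only [B2, wedge2, B5, lsgn, Fin.sum_univ_five]
  norm_num [Fin.ext_iff]
  ring

lemma B2_comb (k l m n : ℝ) (A B C D : Fin 5 → Fin 5 → ℝ) :
    B2 (k • A + l • B) (m • C + n • D) =
      k * m * B2 A C + k * n * B2 A D + l * m * B2 B C + l * n * B2 B D := by
  simp only [B2, Fin.sum_univ_five, Pi.add_apply, Pi.smul_apply, smul_eq_mul]
  ring

lemma B5_comm (a b : Fin 5 → ℝ) : B5 a b = B5 b a := by
  simp only [B5, Fin.sum_univ_five]; ring

lemma B5_ll (p q : E3) : B5 (lcLift p) (lcLift q) = -‖p - q‖ ^ 2 / 2 := by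
  simp [B5, lcLift, Fin.sum_univ_five, EuclideanSpace.norm_sq_eq, Fin.sum_univ_three]
  ring

lemma B5_dl (p p' q : E3) : B5 (dLift p p') (lcLift q) = -inner ℝ (p - q) p' := by
  simp [B5, lcLift, dLift, Fin.sum_univ_five, EuclideanSpace.norm_sq_eq, Fin.sum_univ_three,
    PiLp.inner_apply]
  ring

lemma B5_dd (p p' q q' : E3) : B5 (dLift p p') (dLift q q') = inner ℝ p' q' := by
  simp [B5, dLift, Fin.sum_univ_five, Fin.sum_univ_three, PiLp.inner_apply]
  ring

lemma nwedge_eq (γ : ℝ → E3) (x y : ℝ) :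
    nwedge γ x y = (‖γ x - γ y‖ ^ 2 / 2)⁻¹ • wedge2 (lcLift (γ x)) (lcLift (γ y)) := by
  unfold nwedge
  congr 2
  rw [B2_wedge, B5_ll, B5_ll, B5_ll, B5_ll, norm_sub_rev (γ y) (γ x)]
  rw [← Real.sqrt_sq (by positivity : 0 ≤ ‖γ x - γ y‖ ^ 2 / 2)]
  congr 1
  simp
  ring

lemma hasDerivAt_lift {γ : ℝ → E3} {x : ℝ} (h : DifferentiableAt ℝ γ x) :
    HasDerivAt (fun u => lcLift (γ u)) (dLift (γ x) (deriv γ x)) x := by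
  have h0 := h.hasDerivAt
  have h1 := h0.norm_sq
  have hc : ∀ i, HasDerivAt (fun u => γ u i) (deriv γ x i) x := fun i =>
    (EuclideanSpace.proj (𝕜 := ℝ) i).hasFDerivAt.comp_hasDerivAt x h0
  rw [hasDerivAt_pi]
  intro i
  fin_cases i
  · simpa [lcLift, dLift] using (h1.const_add 1).div_const 2
  · simpa [lcLift, dLift] using hc 0
  · simpa [lcLift, dLift] using hc 1
  · simpa [lcLift, dLift] using hc 2
  · have e := (h1.const_sub 1).div_const 2
    have e2 : -(2 * inner ℝ (γ x) (deriv γ x)) / 2 = -inner ℝ (γ x) (deriv γ x) := by ring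
    rw [e2] at e
    exact e

lemma hasDerivAt_nx {γ : ℝ → E3} {x y : ℝ} (h : DifferentiableAt ℝ γ x) (hne : γ x ≠ γ y) :
    HasDerivAt (fun u => nwedge γ u y)
      ((‖γ x - γ y‖ ^ 2 / 2)⁻¹ • wedge2 (dLift (γ x) (deriv γ x)) (lcLift (γ y)) +
        (-inner ℝ (γ x - γ y) (deriv γ x) / (‖γ x - γ y‖ ^ 2 / 2) ^ 2) •
          wedge2 (lcLift (γ x)) (lcLift (γ y))) x := by
  have hr : ‖γ x - γ y‖ ≠ 0 := norm_ne_zero_iff.2 (sub_ne_zero.2 hne)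
  simp_rw [nwedge_eq]
  have hl := hasDerivAt_lift h
  rw [hasDerivAt_pi] at hl
  have hw : HasDerivAt (fun u => wedge2 (lcLift (γ u)) (lcLift (γ y)))
      (wedge2 (dLift (γ x) (deriv γ x)) (lcLift (γ y))) x := by
    rw [hasDerivAt_pi]; intro i
    rw [hasDerivAt_pi]; intro j
    exact ((hl i).mul_const _).sub ((hl j).mul_const _)
  have hg : HasDerivAt (fun u => (‖γ u - γ y‖ ^ 2 / 2)⁻¹)
      (-inner ℝ (γ x - γ y) (deriv γ x) / (‖γ x - γ y‖ ^ 2 / 2) ^ 2) x := by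
    have := ((h.hasDerivAt.sub_const (γ y)).norm_sq.div_const 2).fun_inv (by positivity)
    have e2 : -(2 * inner ℝ (γ x - γ y) (deriv γ x) / 2) = -inner ℝ (γ x - γ y) (deriv γ x) := by
      ring
    rw [e2] at this
    exact this
  exact hg.smul hw

lemma wedge2_neg (a b : Fin 5 → ℝ) : wedge2 a b = - wedge2 b a := by
  funext i j; simp [wedge2]; ring

lemma nwedge_swap (γ : ℝ → E3) (x y : ℝ) : nwedge γ x y = - nwedge γ y x := by
  rw [nwedge_eq, nwedge_eq, norm_sub_rev, wedge2_neg, smul_neg]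

lemma hasDerivAt_ny {γ : ℝ → E3} {x y : ℝ} (h : DifferentiableAt ℝ γ y) (hne : γ x ≠ γ y) :
    HasDerivAt (fun v => nwedge γ x v)
      ((‖γ x - γ y‖ ^ 2 / 2)⁻¹ • wedge2 (lcLift (γ x)) (dLift (γ y) (deriv γ y)) +
        (inner ℝ (γ x - γ y) (deriv γ y) / (‖γ x - γ y‖ ^ 2 / 2) ^ 2) •
          wedge2 (lcLift (γ x)) (lcLift (γ y))) y := by
  have := (hasDerivAt_nx h hne.symm).neg
  have e1 : (fun v => nwedge γ x v) = -fun v => nwedge γ v x := by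
    funext v; rw [nwedge_swap]; rfl
  rw [e1]
  refine this.congr_deriv ?_
  rw [norm_sub_rev (γ y), wedge2_neg (dLift _ _), wedge2_neg (lcLift (γ y)),
      ← neg_sub (γ x) (γ y), inner_neg_left]
  simp [add_comm]

lemma half_B2 {γ : ℝ → E3} (h : Differentiable ℝ γ) {x y : ℝ} (hne : γ x ≠ γ y) :
    (1 / 2) * B2 (deriv (fun u => nwedge γ u y) x) (deriv (fun v => nwedge γ x v) y) =
      Kf γ x y := by
  have hr : ‖γ x - γ y‖ ≠ 0 := norm_ne_zero_iff.2 (sub_ne_zero.2 hne)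
  rw [(hasDerivAt_nx (h x) hne).deriv, (hasDerivAt_ny (h y) hne).deriv, B2_comb]
  simp only [B2_wedge, B5_comm (lcLift _) (dLift _ _), B5_dl, B5_dd, B5_ll, Kf]
  rw [norm_sub_rev (γ y) (γ x), ← neg_sub (γ x) (γ y), inner_neg_left]
  simp only [sub_self, norm_zero, inner_zero_left]
  field_simp
  ring

lemma nonneg_aux {D T S : E3} (hD : D ≠ 0) (hT : ‖T‖ = 1) (hS : ‖S‖ = 1) :
    1 / ‖D‖ ^ 2 - (2 * inner ℝ D T * inner ℝ D S / ‖D‖ ^ 4 - inner ℝ T S / ‖D‖ ^ 2) =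
      ‖(2 * inner ℝ D T) • D - ‖D‖ ^ 2 • T - ‖D‖ ^ 2 • S‖ ^ 2 / (2 * ‖D‖ ^ 6) := by
  have hr : ‖D‖ ≠ 0 := norm_ne_zero_iff.2 hD
  have : ‖(2 * inner ℝ D T) • D - ‖D‖ ^ 2 • T - ‖D‖ ^ 2 • S‖ ^ 2 =
      2 * ‖D‖ ^ 4 + 2 * ‖D‖ ^ 4 * inner ℝ T S - 4 * ‖D‖ ^ 2 * inner ℝ D T * inner ℝ D S := by
    rw [← real_inner_self_eq_norm_sq]
    simp only [inner_sub_left, inner_sub_right, inner_smul_left, inner_smul_right,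
      real_inner_self_eq_norm_sq, hT, hS, real_inner_comm D T, real_inner_comm D S,
      real_inner_comm T S]
    simp
    ring
  rw [this]
  field_simp
  ring

section bounds
variable {γ : ℝ → E3}

lemma bound_M (hsm : ContDiff ℝ (⊤ : ℕ∞) γ) (hper : Function.Periodic γ 1) :
    ∃ M : ℝ, 1 ≤ M ∧ ∀ x y, ‖deriv γ x - deriv γ y‖ ≤ M * |x - y| := by
  have h1 : ContDiff ℝ (⊤ : ℕ∞) (deriv γ) := (contDiff_infty_iff_deriv.1 hsm).2
  have h2 : ContDiff ℝ (⊤ : ℕ∞) (deriv (deriv γ)) := (contDiff_infty_iff_deriv.1 h1).2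
  have p1 : Function.Periodic (deriv γ) 1 := by
    intro x
    have := deriv_comp_add_const (f := γ) 1 x
    rw [← this]; congr 1; funext u; exact hper u
  have p2 : Function.Periodic (deriv (deriv γ)) 1 := by
    intro x
    have := deriv_comp_add_const (f := deriv γ) 1 x
    rw [← this]; congr 1; funext u; exact p1 u
  obtain ⟨C, hC⟩ := (isCompact_Icc (a := (0:ℝ)) (b := 1)).exists_bound_of_continuousOn
    h2.continuous.continuousOn
  refine ⟨max C 1, le_max_right _ _, fun x y => ?_⟩
  have hb : ∀ z, ‖deriv (deriv γ) z‖ ≤ max C 1 := by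
    intro z
    obtain ⟨w, hw, e⟩ := p2.exists_mem_Ico₀ one_pos z
    rw [e]
    exact (hC w ⟨hw.1, hw.2.le⟩).trans (le_max_left _ _)
  have := convex_univ.norm_image_sub_le_of_norm_deriv_le (𝕜 := ℝ) (f := deriv γ)
    (fun z _ => (h1.differentiable (by simp)) z) (fun z _ => hb z) (Set.mem_univ y) (Set.mem_univ x)
  simpa using this

variable {M : ℝ}

lemma bound_E (hd : Differentiable ℝ γ) (hM : 1 ≤ M)
    (hL : ∀ x y, ‖deriv γ x - deriv γ y‖ ≤ M * |x - y|) (x t : ℝ) :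
    ‖γ (x + t) - γ x - t • deriv γ x‖ ≤ M * |t| ^ 2 := by
  have hder : ∀ s ∈ Set.uIcc 0 t, HasDerivWithinAt (fun s => γ (x + s) - γ x - s • deriv γ x)
      (deriv γ (x + s) - deriv γ x) (Set.uIcc 0 t) s := by
    intro s _
    have h1 := ((hd (x + s)).hasDerivAt.comp_const_add x s)
    have h2 := (hasDerivAt_id s).smul_const (deriv γ x)
    have := (h1.sub_const (γ x)).sub h2
    rw [one_smul] at this
    exact this.hasDerivWithinAt
  have hbd : ∀ s ∈ Set.uIcc 0 t, ‖deriv γ (x + s) - deriv γ x‖ ≤ M * |t| := by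
    intro s hs
    refine (hL _ _).trans ?_
    have := Set.abs_sub_left_of_mem_uIcc hs
    simp only [sub_zero] at this
    simp only [add_sub_cancel_left]
    gcongr
  have := (convex_uIcc 0 t).norm_image_sub_le_of_norm_hasDerivWithin_le hder hbd
    Set.left_mem_uIcc Set.right_mem_uIcc
  simp at this
  calc _ ≤ _ := this
    _ = _ := by ring

lemma bound_e (hd : Differentiable ℝ γ) (hM : 1 ≤ M) (hunit : ∀ s : ℝ, ‖deriv γ s‖ = 1)
    (hL : ∀ x y, ‖deriv γ x - deriv γ y‖ ≤ M * |x - y|) (x t : ℝ) :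
    |inner ℝ (γ (x + t) - γ x) (deriv γ x) - t| ≤ M ^ 2 * |t| ^ 3 / 2 := by
  have hder : ∀ s ∈ Set.uIcc 0 t, HasDerivWithinAt
      (fun s => inner ℝ (γ (x + s) - γ x) (deriv γ x) - s)
      (inner ℝ (deriv γ (x + s)) (deriv γ x) - 1) (Set.uIcc 0 t) s := by
    intro s _
    have h1 := ((hd (x + s)).hasDerivAt.comp_const_add x s).sub_const (γ x)
    have h2 := (h1.inner ℝ (hasDerivAt_const s (deriv γ x))).sub (hasDerivAt_id s)
    simp only [inner_zero_right, zero_add] at h2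
    exact h2.hasDerivWithinAt
  have hbd : ∀ s ∈ Set.uIcc 0 t, ‖inner ℝ (deriv γ (x + s)) (deriv γ x) - 1‖ ≤ (M * |t|) ^ 2 / 2 := by
    intro s hs
    have h1 : ‖deriv γ (x + s) - deriv γ x‖ ≤ M * |t| := by
      refine (hL _ _).trans ?_
      have := Set.abs_sub_left_of_mem_uIcc hs
      simp only [sub_zero] at this
      simp only [add_sub_cancel_left]
      gcongr
    have h2 := norm_sub_sq_real (deriv γ (x + s)) (deriv γ x)
    rw [hunit, hunit] at h2
    have h3 : inner ℝ (deriv γ (x + s)) (deriv γ x) - 1 =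
      -(‖deriv γ (x + s) - deriv γ x‖ ^ 2 / 2) := by linarith
    rw [h3, norm_neg, Real.norm_of_nonneg (by positivity)]
    gcongr
  have := (convex_uIcc 0 t).norm_image_sub_le_of_norm_hasDerivWithin_le hder hbd
    Set.left_mem_uIcc Set.right_mem_uIcc
  simp at this
  calc _ ≤ _ := this
    _ = _ := by ring

lemma bound_r (hd : Differentiable ℝ γ) (hM : 1 ≤ M) (hunit : ∀ s : ℝ, ‖deriv γ s‖ = 1)
    (hinj : ∀ s t : ℝ, γ s = γ t → ∃ n : ℤ, s - t = n)
    (hL : ∀ x y, ‖deriv γ x - deriv γ y‖ ≤ M * |x - y|) :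
    ∃ c : ℝ, 0 < c ∧ ∀ x ∈ Set.Icc (0:ℝ) 1, ∀ t : ℝ, |t| ≤ 1 / 2 →
      c * |t| ≤ ‖γ (x + t) - γ x‖ := by
  let S : Set (ℝ × ℝ) := Set.Icc 0 1 ×ˢ (Set.Icc (-(1/2)) (1/2) ∩ {t | 1 / (2 * M) ≤ |t|})
  have hS : IsCompact S := isCompact_Icc.prod
    (isCompact_Icc.inter_right (isClosed_le continuous_const continuous_abs))
  have hc := hd.continuous
  have hcont : ContinuousOn (fun p : ℝ × ℝ => ‖γ (p.1 + p.2) - γ p.1‖) S :=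
    Continuous.continuousOn (by fun_prop)
  have hpos : ∀ p ∈ S, 0 < ‖γ (p.1 + p.2) - γ p.1‖ := by
    rintro ⟨x, t⟩ ⟨_, ht, ht2⟩
    rw [norm_pos_iff, sub_ne_zero]
    intro h
    obtain ⟨n, hn⟩ := hinj _ _ h
    simp only [add_sub_cancel_left] at hn
    simp only [Set.mem_Icc, Set.mem_ofPred_eq] at ht ht2
    have h1 : (0:ℝ) < |t| := lt_of_lt_of_le (by positivity) ht2
    have h2 : |t| ≤ 1 / 2 := abs_le.2 ht
    rw [hn, ← Int.cast_abs] at h1 h2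
    have h3 : 0 < |n| := by exact_mod_cast h1
    have h4 : (1:ℝ) ≤ |n| := by exact_mod_cast h3
    linarith
  obtain ⟨m, hm, hmS⟩ := hS.exists_forall_le' hcont (a := 0) hpos
  refine ⟨min (1/2) m, by positivity, fun x hx t ht => ?_⟩
  rcases le_or_gt (1 / (2 * M)) |t| with h | h
  · have := hmS (x, t) ⟨hx, abs_le.1 ht, h⟩
    calc min (1/2) m * |t| ≤ m * 1 := by
          gcongr
          · exact min_le_right _ _
          · linarith
      _ ≤ _ := by simpa using this
  · have h1 := bound_E hd hM hL x t
    have h2 : M * |t| ≤ 1 / 2 := by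
      rw [lt_div_iff₀ (by positivity)] at h; linarith
    have h3 : ‖t • deriv γ x‖ = |t| := by rw [norm_smul, hunit]; simp
    have h4 := norm_sub_norm_le (t • deriv γ x) (t • deriv γ x - (γ (x + t) - γ x))
    rw [sub_sub_cancel, h3, norm_sub_rev] at h4
    have h5 : M * |t| ^ 2 ≤ 1 / 2 * |t| := by nlinarith [abs_nonneg t]
    calc min (1/2) m * |t| ≤ 1 / 2 * |t| := by
          gcongr
          · exact min_le_left _ _
      _ ≤ _ := by linarith

end bounds

section vec
variable {D T S : E3} {t M c : ℝ}

lemma vec_sq (hM : 1 ≤ M) (hT : ‖T‖ = 1) (hE : ‖D - t • T‖ ≤ M * |t| ^ 2)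
    (he : |inner ℝ D T - t| ≤ M ^ 2 * |t| ^ 3 / 2) :
    |‖D‖ ^ 2 - t ^ 2| ≤ 2 * M ^ 2 * |t| ^ 4 := by
  have h1 : ‖D‖ ^ 2 - t ^ 2 = ‖D - t • T‖ ^ 2 + 2 * t * (inner ℝ D T - t) := by
    rw [norm_sub_sq_real, norm_smul, hT, inner_smul_right, Real.norm_eq_abs, mul_one, sq_abs]
    ring
  rw [h1]
  calc _ ≤ |‖D - t • T‖ ^ 2| + |2 * t * (inner ℝ D T - t)| := abs_add_le _ _
    _ = ‖D - t • T‖ ^ 2 + 2 * |t| * |inner ℝ D T - t| := by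
        rw [abs_of_nonneg (sq_nonneg _), abs_mul, abs_mul]; simp
    _ ≤ (M * |t| ^ 2) ^ 2 + 2 * |t| * (M ^ 2 * |t| ^ 3 / 2) := by gcongr
    _ = _ := by ring

lemma vec_a (hM : 1 ≤ M) (hc : 0 < c) (ht : t ≠ 0) (hT : ‖T‖ = 1)
    (hE : ‖D - t • T‖ ≤ M * |t| ^ 2)
    (he : |inner ℝ D T - t| ≤ M ^ 2 * |t| ^ 3 / 2) (hr : c * |t| ≤ ‖D‖) :
    |1 / ‖D‖ ^ 2 - 1 / t ^ 2| ≤ 2 * M ^ 2 / c ^ 2 := by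
  have ht' : 0 < |t| := abs_pos.2 ht
  have hD : 0 < ‖D‖ := lt_of_lt_of_le (by positivity) hr
  have h1 : 1 / ‖D‖ ^ 2 - 1 / t ^ 2 = -(‖D‖ ^ 2 - t ^ 2) / (‖D‖ ^ 2 * |t| ^ 2) := by
    rw [sq_abs]; field_simp; ring
  rw [h1, abs_div, abs_neg, abs_of_pos (a := ‖D‖ ^ 2 * |t| ^ 2) (by positivity)]
  calc _ ≤ (2 * M ^ 2 * |t| ^ 4) / ((c * |t|) ^ 2 * |t| ^ 2) := by
        gcongr; exact vec_sq hM hT hE he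
    _ = _ := by field_simp

lemma vec_diff (hM : 1 ≤ M) (hT : ‖T‖ = 1) (hE : ‖D - t • T‖ ≤ M * |t| ^ 2)
    (he : |inner ℝ D T - t| ≤ M ^ 2 * |t| ^ 3 / 2) :
    |t * inner ℝ D T - ‖D‖ ^ 2| ≤ 5 / 2 * M ^ 2 * |t| ^ 4 := by
  have h1 : t * inner ℝ D T - ‖D‖ ^ 2 = t * (inner ℝ D T - t) - (‖D‖ ^ 2 - t ^ 2) := by ring
  rw [h1]
  calc _ ≤ |t * (inner ℝ D T - t)| + |‖D‖ ^ 2 - t ^ 2| := abs_sub _ _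
    _ ≤ |t| * (M ^ 2 * |t| ^ 3 / 2) + 2 * M ^ 2 * |t| ^ 4 := by
        rw [abs_mul]; gcongr; exact vec_sq hM hT hE he
    _ = _ := by ring

lemma vec_A (hM : 1 ≤ M) (hc : 0 < c) (ht : t ≠ 0) (hT : ‖T‖ = 1)
    (hE : ‖D - t • T‖ ≤ M * |t| ^ 2)
    (he : |inner ℝ D T - t| ≤ M ^ 2 * |t| ^ 3 / 2) (hr : c * |t| ≤ ‖D‖) :
    |1 / t - inner ℝ D T / ‖D‖ ^ 2| ≤ 5 / 2 * M ^ 2 / c ^ 2 * |t| := by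
  have ht' : 0 < |t| := abs_pos.2 ht
  have hD : 0 < ‖D‖ := lt_of_lt_of_le (by positivity) hr
  have h1 : 1 / t - inner ℝ D T / ‖D‖ ^ 2 = -(t * inner ℝ D T - ‖D‖ ^ 2) / (t * ‖D‖ ^ 2) := by
    field_simp; ring
  rw [h1, abs_div, abs_neg, abs_mul, abs_of_pos (a := ‖D‖ ^ 2) (by positivity)]
  calc _ ≤ (5 / 2 * M ^ 2 * |t| ^ 4) / (|t| * (c * |t|) ^ 2) := by
        gcongr; exact vec_diff hM hT hE he
    _ = _ := by field_simp

lemma vec_b (hM : 1 ≤ M) (hc : 0 < c) (ht : t ≠ 0) (ht2 : |t| ≤ 1 / 2) (hT : ‖T‖ = 1)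
    (hS : ‖S‖ = 1) (hST : ‖S - T‖ ≤ M * |t|)
    (hE : ‖D - t • T‖ ≤ M * |t| ^ 2)
    (he : |inner ℝ D T - t| ≤ M ^ 2 * |t| ^ 3 / 2) (hr : c * |t| ≤ ‖D‖) :
    |1 / ‖D‖ ^ 2 - (2 * inner ℝ D T * inner ℝ D S / ‖D‖ ^ 4 - inner ℝ T S / ‖D‖ ^ 2)|
      ≤ 72 * M ^ 6 / c ^ 6 := by
  have ht' : 0 < |t| := abs_pos.2 ht
  have hD : 0 < ‖D‖ := lt_of_lt_of_le (by positivity) hr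
  rw [nonneg_aux (norm_pos_iff.1 hD) hT hS, abs_of_nonneg (by positivity)]
  have hsq := vec_sq hM hT hE he
  have hdf := vec_diff hM hT hE he
  have h43 : |t| ^ 4 ≤ |t| ^ 3 := pow_le_pow_of_le_one ht'.le (by linarith) (by norm_num)
  have h42 : |t| ^ 4 ≤ |t| ^ 2 := pow_le_pow_of_le_one ht'.le (by linarith) (by norm_num)
  have h31 : |t| ^ 3 ≤ |t| ^ 1 := pow_le_pow_of_le_one ht'.le (by linarith) (by norm_num)
  have hM2 : 1 ≤ M ^ 2 := one_le_pow₀ hM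
  have hM23 : M ^ 2 ≤ M ^ 3 := pow_le_pow_right₀ hM (by norm_num)
  have hin : |inner ℝ D T| ≤ 2 * M ^ 2 * |t| := by
    have : |inner ℝ D T| ≤ |inner ℝ D T - t| + |t| := by
      simpa using abs_add_le (inner ℝ D T - t) t
    have h2 : M ^ 2 * |t| ^ 3 ≤ M ^ 2 * |t| := by
      gcongr; simpa using h31
    nlinarith
  have hr2 : ‖D‖ ^ 2 ≤ 3 * M ^ 2 * |t| ^ 2 := by
    have := (abs_le.1 hsq).2
    have h2 : M ^ 2 * |t| ^ 4 ≤ M ^ 2 * |t| ^ 2 := by gcongr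
    have h3 : t ^ 2 = |t| ^ 2 := (sq_abs t).symm
    nlinarith [sq_nonneg |t|]
  have hV : ‖(2 * inner ℝ D T) • D - ‖D‖ ^ 2 • T - ‖D‖ ^ 2 • S‖ ≤ 12 * M ^ 3 * |t| ^ 3 := by
    have e : (2 * inner ℝ D T) • D - ‖D‖ ^ 2 • T - ‖D‖ ^ 2 • S =
        (2 * inner ℝ D T) • (D - t • T) + (2 * (t * inner ℝ D T - ‖D‖ ^ 2)) • T
          - ‖D‖ ^ 2 • (S - T) := by
      module
    rw [e]
    calc _ ≤ ‖(2 * inner ℝ D T) • (D - t • T)‖ + ‖(2 * (t * inner ℝ D T - ‖D‖ ^ 2)) • T‖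
          + ‖‖D‖ ^ 2 • (S - T)‖ := (norm_sub_le _ _).trans (by gcongr; exact norm_add_le _ _)
      _ = 2 * |inner ℝ D T| * ‖D - t • T‖ + 2 * |t * inner ℝ D T - ‖D‖ ^ 2|
          + ‖D‖ ^ 2 * ‖S - T‖ := by
        simp only [norm_smul, hT, Real.norm_eq_abs, abs_mul, abs_two, mul_one, abs_pow, abs_norm]
      _ ≤ 2 * (2 * M ^ 2 * |t|) * (M * |t| ^ 2) + 2 * (5 / 2 * M ^ 2 * |t| ^ 4)
          + 3 * M ^ 2 * |t| ^ 2 * (M * |t|) := by gcongr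
      _ ≤ 2 * (2 * M ^ 2 * |t|) * (M * |t| ^ 2) + 2 * (5 / 2 * M ^ 3 * |t| ^ 3)
          + 3 * M ^ 2 * |t| ^ 2 * (M * |t|) := by gcongr
      _ = _ := by ring
  calc _ ≤ (12 * M ^ 3 * |t| ^ 3) ^ 2 / (2 * (c * |t|) ^ 6) := by gcongr
    _ = _ := by field_simp; ring

end vec

lemma arcd_eq {x y : ℝ} (h : |y - x| ≤ 1) : arcd x y = |(y - x) - round (y - x)| := by
  rw [abs_sub_round_eq_min, arcd, abs_sub_comm]
  generalize y - x = z at *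
  rw [abs_le] at h
  rcases h.2.lt_or_eq with h2 | h2
  · rcases le_or_gt 0 z with h3 | h3
    · rw [Int.fract_eq_self.2 ⟨h3, h2⟩, abs_of_nonneg h3]
    · have : Int.fract z = z + 1 := by
        rw [Int.fract_eq_iff]
        exact ⟨by linarith, by linarith, -1, by push_cast; ring⟩
      rw [this, abs_of_neg h3, min_comm]
      congr 1 <;> ring
  · subst h2; simp

lemma Kf_add_int {γ : ℝ → E3} (hper : Function.Periodic γ 1) (x y : ℝ) (n : ℤ) :
    Kf γ x (y + n) = Kf γ x y := by
  have p1 : Function.Periodic (deriv γ) 1 := by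
    intro x
    have := deriv_comp_add_const (f := γ) 1 x
    rw [← this]; congr 1; funext u; exact hper u
  have h1 : γ (y + n) = γ y := by simpa using hper.int_mul n y
  have h2 : deriv γ (y + n) = deriv γ y := by simpa using p1.int_mul n y
  rw [Kf, h1, h2, ← Kf]

lemma Kf_eq (γ : ℝ → E3) (x y : ℝ) : Kf γ x y =
   2 * inner ℝ (γ y - γ x) (deriv γ x) * inner ℝ (γ y - γ x) (deriv γ y) / ‖γ y - γ x‖ ^ 4
    - inner ℝ (deriv γ x) (deriv γ y) / ‖γ y - γ x‖ ^ 2 := by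
  rw [Kf, norm_sub_rev, ← neg_sub (γ y) (γ x), inner_neg_left, inner_neg_left]
  ring

lemma measurable_Kf {γ : ℝ → E3} (hc : Continuous γ) (hc' : Continuous (deriv γ)) :
    Measurable (fun p : ℝ × ℝ => Kf γ p.1 p.2) := by
  unfold Kf
  refine Measurable.sub (Measurable.div ?_ ?_) (Measurable.div ?_ ?_)
  all_goals apply Continuous.measurable; fun_prop

lemma continuous_arcd : Continuous (fun p : ℝ × ℝ => arcd p.1 p.2) := by
  unfold arcd; fun_prop

lemma hasDerivAt_P {γ : ℝ → E3} (hd : Differentiable ℝ γ) {x t : ℝ} (ht : t ≠ 0)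
    (hne : γ (x + t) ≠ γ x) :
    HasDerivAt (fun t => 1 / t - inner ℝ (γ (x + t) - γ x) (deriv γ x) / ‖γ (x + t) - γ x‖ ^ 2)
      (Kf γ x (x + t) - 1 / t ^ 2) t := by
  have hr : ‖γ (x + t) - γ x‖ ≠ 0 := norm_ne_zero_iff.2 (sub_ne_zero.2 hne)
  have h1 := ((hd (x + t)).hasDerivAt.comp_const_add x t).sub_const (γ x)
  have h2 := h1.inner ℝ (hasDerivAt_const t (deriv γ x))
  have h3 := (hasDerivAt_inv ht).sub (h2.div h1.norm_sq (pow_ne_zero 2 hr))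
  have e : (fun t => 1 / t - inner ℝ (γ (x + t) - γ x) (deriv γ x) / ‖γ (x + t) - γ x‖ ^ 2) =
    ((fun t => t⁻¹) - ((fun t => inner ℝ (γ (x + t) - γ x) (deriv γ x)) /
      (fun t => ‖γ (x + t) - γ x‖ ^ 2))) := by
    funext t; simp
  rw [e]
  refine HasDerivAt.congr_deriv h3 ?_
  rw [Kf_eq, real_inner_comm (deriv γ (x + t)) (deriv γ x), inner_zero_right]
  field_simp
  ring

lemma inner_int {γ : ℝ → E3} (hd : Differentiable ℝ γ) (hd' : Continuous (deriv γ))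
    (hper : Function.Periodic γ 1) {x C C' : ℝ} (hx : x ∈ Set.Icc (0:ℝ) 1)
    (hne : ∀ t : ℝ, t ≠ 0 → |t| ≤ 1 / 2 → γ (x + t) ≠ γ x)
    (hA : ∀ t : ℝ, t ≠ 0 → |t| ≤ 1 / 2 →
      |1 / t - inner ℝ (γ (x + t) - γ x) (deriv γ x) / ‖γ (x + t) - γ x‖ ^ 2| ≤ C * |t|)
    (hK : ∀ t : ℝ, t ≠ 0 → |t| ≤ 1 / 2 → |Kf γ x (x + t) - 1 / t ^ 2| ≤ C') :
    ∫ y in Set.Icc (0:ℝ) 1, (Kf γ x y - 1 / arcd x y ^ 2) = 4 := by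
  let F : ℝ → ℝ := fun t => Kf γ x (x + t) - 1 / |t - round t| ^ 2
  have hF : Function.Periodic F 1 := by
    intro t
    have h1 := Kf_add_int hper x (x + t) 1
    simp only [F, round_add_one, Int.cast_add, Int.cast_one, ← add_assoc, add_sub_add_right_eq_sub]
    rw [← h1]; simp
  have e1 : ∫ y in Set.Icc (0:ℝ) 1, (Kf γ x y - 1 / arcd x y ^ 2) = ∫ y in (0:ℝ)..1, F (y - x) := by
    rw [integral_Icc_eq_integral_Ioc, ← intervalIntegral.integral_of_le zero_le_one]
    refine intervalIntegral.integral_congr fun y hy => ?_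
    rw [Set.uIcc_of_le zero_le_one] at hy
    simp only [F]
    rw [arcd_eq (abs_le.2 ⟨by linarith [hx.2, hy.1], by linarith [hx.1, hy.2]⟩)]
    simp
  have e2 : ∫ t in (0 - x)..(1 - x), F t = ∫ t in (-(1/2):ℝ)..(1/2), F t := by
    have := hF.intervalIntegral_add_eq (0 - x) (-(1/2))
    convert this using 2 <;> ring
  have e3 : ∫ t in (-(1/2):ℝ)..(1/2), F t =
      ∫ t in (-(1/2):ℝ)..(1/2), (Kf γ x (x + t) - 1 / t ^ 2) := by
    refine intervalIntegral.integral_congr fun t ht => ?_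
    rw [Set.uIcc_of_le (by norm_num)] at ht
    simp only [F]
    have h := arcd_eq (x := 0) (y := t) (abs_le.2 ⟨by linarith [ht.1], by linarith [ht.2]⟩)
    simp only [sub_zero] at h
    rw [← h, arcd, zero_sub, abs_neg, min_eq_left, sq_abs]
    have := abs_le.2 ht
    linarith
  have hm : Measurable (fun t => Kf γ x (x + t) - 1 / t ^ 2) := by
    have h1 : Measurable (fun t => Kf γ x (x + t)) :=
      (measurable_Kf hd.continuous hd').comp (g := fun p : ℝ × ℝ => Kf γ p.1 p.2)
        (f := fun t : ℝ => (x, x + t)) (by fun_prop)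
    exact h1.sub (by fun_prop)
  have e4 : ∫ t in (-(1/2):ℝ)..(1/2), (Kf γ x (x + t) - 1 / t ^ 2) = 4 := by
    rw [integral_eq_of_hasDerivAt_off_countable
      (fun t => 1 / t - inner ℝ (γ (x + t) - γ x) (deriv γ x) / ‖γ (x + t) - γ x‖ ^ 2) _
      (Set.countable_singleton (0:ℝ))]
    · have h : γ (x + -(1/2)) = γ (x + 1/2) := by
        rw [← hper]; congr 1; ring
      simp only [h]
      ring
    · intro t ht
      rw [Set.uIcc_of_le (by norm_num)] at ht
      rcases eq_or_ne t 0 with rfl | h0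
      · have hb : Filter.Tendsto (fun t : ℝ => C * |t|)
            (nhdsWithin 0 (Set.uIcc (-(1/2)) (1/2))) (nhds 0) := by
          have : Continuous (fun t : ℝ => C * |t|) := by fun_prop
          simpa using (this.tendsto 0).mono_left nhdsWithin_le_nhds
        rw [ContinuousWithinAt]
        simp only [add_zero, sub_self, norm_zero, inner_zero_left, div_zero]
        have hb2 : ∀ᶠ t in nhdsWithin (0:ℝ) (Set.uIcc (-(1/2)) (1/2)),
            ‖1 / t - inner ℝ (γ (x + t) - γ x) (deriv γ x) / ‖γ (x + t) - γ x‖ ^ 2‖ ≤ C * |t| := by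
         filter_upwards [self_mem_nhdsWithin] with t ht
         rw [Set.uIcc_of_le (by norm_num)] at ht
         rcases eq_or_ne t 0 with rfl | h0
         · simp
         · exact hA t h0 (abs_le.2 ht)
        simpa only [zero_div, sub_zero] using squeeze_zero_norm' hb2 hb
      · exact (hasDerivAt_P hd h0 (hne t h0 (abs_le.2 ht))).continuousAt.continuousWithinAt
    · rintro t ⟨ht, h0⟩
      rw [min_eq_left (by norm_num), max_eq_right (by norm_num)] at ht
      exact hasDerivAt_P hd h0 (hne t h0 (abs_le.2 ⟨ht.1.le, ht.2.le⟩))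
    · rw [intervalIntegrable_iff_integrableOn_Icc_of_le (by norm_num)]
      refine Measure.integrableOn_of_bounded (M := C') (by simp) hm.aestronglyMeasurable ?_
      have hz : ∀ᵐ t : ℝ, t ≠ 0 := by simp [ae_iff]
      filter_upwards [ae_restrict_mem measurableSet_Icc, ae_restrict_of_ae hz] with t ht h0
      exact hK t h0 (abs_le.2 ht)
  rw [e1, intervalIntegral.integral_comp_sub_right, e2, e3, e4]

lemma ae_ne {γ : ℝ → E3} (hinj : ∀ s t : ℝ, γ s = γ t → ∃ n : ℤ, s - t = n) :
    ∀ᵐ p : ℝ × ℝ, γ p.1 ≠ γ p.2 := by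
  have hn : (volume : Measure (ℝ × ℝ)) {p | ∃ n : ℤ, p.1 - p.2 = n} = 0 := by
    have hms : MeasurableSet {p : ℝ × ℝ | ∃ n : ℤ, p.1 - p.2 = n} := by
      have : {p : ℝ × ℝ | ∃ n : ℤ, p.1 - p.2 = n} = ⋃ n : ℤ, {p : ℝ × ℝ | p.1 - p.2 = (n : ℝ)} := by
        ext; simp
      rw [this]
      exact MeasurableSet.iUnion fun n => (isClosed_eq (by fun_prop) (by fun_prop)).measurableSet
    rw [Measure.volume_eq_prod, Measure.measure_prod_null hms]
    refine Filter.Eventually.of_forall fun x => ?_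
    have : (Prod.mk x ⁻¹' {p : ℝ × ℝ | ∃ n : ℤ, p.1 - p.2 = n}) ⊆
        Set.range (fun n : ℤ => x - n) := by
      rintro y ⟨n, hn⟩
      exact ⟨n, by simp only at hn ⊢; linarith⟩
    exact ((Set.countable_range _).mono this).measure_zero _
  refine measure_mono_null ?_ hn
  intro p hp
  have hpeq : γ p.1 = γ p.2 := not_not.1 hp
  exact hinj _ _ hpeq

/-- O'Hara's energy expressed through the infinitesimal cross ratio and the signed area
form: `E∘(γ) = −4 + ∬ (1/|γ(x)−γ(y)|² − 1/d(x,y)²) dx dy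
= ∬ (1/|γ(x)−γ(y)|² − (1/2)·B₂(∂s/∂x, ∂s/∂y)) dx dy`, the right-hand integrand being
nonnegative (off the diagonal) and integrable. -/
theorem energy_eq_cross_ratio_area_formula (γ : ℝ → E3)
    (hsm : ContDiff ℝ (⊤ : ℕ∞) γ)
    (hper : Function.Periodic γ 1)
    (hinj : ∀ s t : ℝ, γ s = γ t → ∃ n : ℤ, s - t = n)
    (hunit : ∀ s : ℝ, ‖deriv γ s‖ = 1) :
    IntegrableOn
      (fun p : ℝ × ℝ => 1 / ‖γ p.1 - γ p.2‖ ^ 2 - 1 / arcd p.1 p.2 ^ 2)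
      (Set.Icc 0 1 ×ˢ Set.Icc 0 1) ∧
    IntegrableOn
      (fun p : ℝ × ℝ => 1 / ‖γ p.1 - γ p.2‖ ^ 2 -
        (1 / 2) * B2 (deriv (fun u => nwedge γ u p.2) p.1)
          (deriv (fun v => nwedge γ p.1 v) p.2))
      (Set.Icc 0 1 ×ˢ Set.Icc 0 1) ∧
    (∀ x ∈ Set.Icc (0:ℝ) 1, ∀ y ∈ Set.Icc (0:ℝ) 1, γ x ≠ γ y →
      0 ≤ 1 / ‖γ x - γ y‖ ^ 2 -
        (1 / 2) * B2 (deriv (fun u => nwedge γ u y) x)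
          (deriv (fun v => nwedge γ x v) y)) ∧
    -4 + (∫ p in Set.Icc (0:ℝ) 1 ×ˢ Set.Icc (0:ℝ) 1,
        (1 / ‖γ p.1 - γ p.2‖ ^ 2 - 1 / arcd p.1 p.2 ^ 2)) =
      ∫ p in Set.Icc (0:ℝ) 1 ×ˢ Set.Icc (0:ℝ) 1,
        (1 / ‖γ p.1 - γ p.2‖ ^ 2 -
          (1 / 2) * B2 (deriv (fun u => nwedge γ u p.2) p.1)
            (deriv (fun v => nwedge γ p.1 v) p.2)) := by
  have hd : Differentiable ℝ γ := hsm.differentiable (by simp)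
  have hd' : Continuous (deriv γ) := (contDiff_infty_iff_deriv.1 hsm).2.continuous
  obtain ⟨M, hM, hL⟩ := bound_M hsm hper
  obtain ⟨c, hc, hr⟩ := bound_r hd hM hunit hinj hL
  have hST : ∀ x t, ‖deriv γ (x + t) - deriv γ x‖ ≤ M * |t| := fun x t => by
    simpa using hL (x + t) x
  have ka : ∀ x ∈ Set.Icc (0:ℝ) 1, ∀ t : ℝ, t ≠ 0 → |t| ≤ 1 / 2 →
      |1 / ‖γ x - γ (x + t)‖ ^ 2 - 1 / t ^ 2| ≤ 2 * M ^ 2 / c ^ 2 := fun x hx t h0 ht => by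
    rw [norm_sub_rev]
    exact vec_a hM hc h0 (hunit x) (bound_E hd hM hL x t) (bound_e hd hM hunit hL x t) (hr x hx t ht)
  have kb : ∀ x ∈ Set.Icc (0:ℝ) 1, ∀ t : ℝ, t ≠ 0 → |t| ≤ 1 / 2 →
      |1 / ‖γ x - γ (x + t)‖ ^ 2 - Kf γ x (x + t)| ≤ 72 * M ^ 6 / c ^ 6 := fun x hx t h0 ht => by
    rw [norm_sub_rev, Kf_eq]
    exact vec_b hM hc h0 ht (hunit x) (hunit _) (hST x t) (bound_E hd hM hL x t)
      (bound_e hd hM hunit hL x t) (hr x hx t ht)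
  have hinner : ∀ x ∈ Set.Icc (0:ℝ) 1,
      ∫ y in Set.Icc (0:ℝ) 1, (Kf γ x y - 1 / arcd x y ^ 2) = 4 := fun x hx => by
    refine inner_int hd hd' hper hx (C := 5 / 2 * M ^ 2 / c ^ 2)
      (C' := 2 * M ^ 2 / c ^ 2 + 72 * M ^ 6 / c ^ 6) ?_ ?_ ?_
    · intro t h0 ht
      have h1 := hr x hx t ht
      have h2 : 0 < |t| := abs_pos.2 h0
      rw [← sub_ne_zero, ← norm_pos_iff]
      exact lt_of_lt_of_le (by positivity) h1
    · intro t h0 ht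
      exact vec_A hM hc h0 (hunit x) (bound_E hd hM hL x t) (bound_e hd hM hunit hL x t)
        (hr x hx t ht)
    · intro t h0 ht
      have h1 := abs_le.1 (ka x hx t h0 ht)
      have h2 := abs_le.1 (kb x hx t h0 ht)
      exact abs_le.2 ⟨by linarith [h1.1, h2.2], by linarith [h1.2, h2.1]⟩
  have hred : ∀ x ∈ Set.Icc (0:ℝ) 1, ∀ y ∈ Set.Icc (0:ℝ) 1, γ x ≠ γ y →
      ∃ t : ℝ, t ≠ 0 ∧ |t| ≤ 1 / 2 ∧ arcd x y ^ 2 = t ^ 2 ∧ γ y = γ (x + t) ∧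
        Kf γ x y = Kf γ x (x + t) := by
    intro x hx y hy hne
    have e : y = x + (y - x - round (y - x)) + (round (y - x) : ℤ) := by ring
    have hg : γ y = γ (x + (y - x - round (y - x))) := by
      have h := hper.int_mul (round (y - x)) (x + (y - x - round (y - x)))
      rw [mul_one, ← e] at h
      exact h
    refine ⟨y - x - round (y - x), ?_, abs_sub_round _, ?_, hg, ?_⟩
    · intro h; rw [h, add_zero] at hg; exact hne hg.symm
    · rw [arcd_eq (abs_le.2 ⟨by linarith [hx.2, hy.1], by linarith [hx.1, hy.2]⟩), sq_abs]
    · have h := Kf_add_int hper x (x + (y - x - round (y - x))) (round (y - x))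
      rw [← e] at h
      exact h
  have hms : MeasurableSet (Set.Icc (0:ℝ) 1 ×ˢ Set.Icc (0:ℝ) 1) :=
    measurableSet_Icc.prod measurableSet_Icc
  have hfin : (volume : Measure (ℝ × ℝ)) (Set.Icc (0:ℝ) 1 ×ˢ Set.Icc (0:ℝ) 1) ≠ ⊤ :=
    (isCompact_Icc.prod isCompact_Icc).measure_lt_top.ne
  have hae : ∀ᵐ p : ℝ × ℝ ∂(volume.restrict (Set.Icc (0:ℝ) 1 ×ˢ Set.Icc (0:ℝ) 1)),
      p.1 ∈ Set.Icc (0:ℝ) 1 ∧ p.2 ∈ Set.Icc (0:ℝ) 1 ∧ γ p.1 ≠ γ p.2 := by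
    filter_upwards [ae_restrict_mem hms, ae_restrict_of_ae (ae_ne hinj)] with p hp h
    exact ⟨hp.1, hp.2, h⟩
  have hcr := hd.continuous
  have mr : Measurable (fun p : ℝ × ℝ => 1 / ‖γ p.1 - γ p.2‖ ^ 2) :=
    Measurable.div measurable_const (Continuous.measurable (by fun_prop))
  have ma : Measurable (fun p : ℝ × ℝ => 1 / arcd p.1 p.2 ^ 2) :=
    Measurable.div measurable_const (Continuous.measurable (continuous_arcd.pow 2))
  have mK := measurable_Kf hd.continuous hd'
  have I1 : IntegrableOn
      (fun p : ℝ × ℝ => 1 / ‖γ p.1 - γ p.2‖ ^ 2 - 1 / arcd p.1 p.2 ^ 2)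
      (Set.Icc 0 1 ×ˢ Set.Icc 0 1) := by
    refine Measure.integrableOn_of_bounded (M := 2 * M ^ 2 / c ^ 2) hfin
      (mr.sub ma).aestronglyMeasurable ?_
    filter_upwards [hae] with p hp
    obtain ⟨t, h0, ht, h1, h2, h3⟩ := hred p.1 hp.1 p.2 hp.2.1 hp.2.2
    rw [h1, h2]
    exact ka p.1 hp.1 t h0 ht
  have I2 : IntegrableOn
      (fun p : ℝ × ℝ => 1 / ‖γ p.1 - γ p.2‖ ^ 2 - Kf γ p.1 p.2)
      (Set.Icc 0 1 ×ˢ Set.Icc 0 1) := by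
    refine Measure.integrableOn_of_bounded (M := 72 * M ^ 6 / c ^ 6) hfin
      (mr.sub mK).aestronglyMeasurable ?_
    filter_upwards [hae] with p hp
    obtain ⟨t, h0, ht, h1, h2, h3⟩ := hred p.1 hp.1 p.2 hp.2.1 hp.2.2
    rw [h3, h2]
    exact kb p.1 hp.1 t h0 ht
  have heq : (fun p : ℝ × ℝ => 1 / ‖γ p.1 - γ p.2‖ ^ 2 - Kf γ p.1 p.2)
      =ᵐ[volume.restrict (Set.Icc (0:ℝ) 1 ×ˢ Set.Icc (0:ℝ) 1)]
      (fun p : ℝ × ℝ => 1 / ‖γ p.1 - γ p.2‖ ^ 2 -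
        (1 / 2) * B2 (deriv (fun u => nwedge γ u p.2) p.1)
          (deriv (fun v => nwedge γ p.1 v) p.2)) := by
    filter_upwards [hae] with p hp
    rw [half_B2 hd hp.2.2]
  refine ⟨I1, Integrable.congr I2 heq, ?_, ?_⟩
  · intro x _ y _ hne
    rw [half_B2 hd hne, Kf, nonneg_aux (sub_ne_zero.2 hne) (hunit x) (hunit y)]
    positivity
  · rw [← integral_congr_ae heq]
    have h1 := integral_sub I1 I2
    have h2 : ∫ p in Set.Icc (0:ℝ) 1 ×ˢ Set.Icc (0:ℝ) 1,
        ((1 / ‖γ p.1 - γ p.2‖ ^ 2 - 1 / arcd p.1 p.2 ^ 2) -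
          (1 / ‖γ p.1 - γ p.2‖ ^ 2 - Kf γ p.1 p.2)) = 4 := by
      have I3 := I1.sub I2
      rw [Measure.volume_eq_prod] at I3 ⊢
      refine (setIntegral_prod _ I3).trans ?_
      simp only [Pi.sub_apply]
      have h3 : ∀ x ∈ Set.Icc (0:ℝ) 1, ∫ y in Set.Icc (0:ℝ) 1,
        ((1 / ‖γ x - γ y‖ ^ 2 - 1 / arcd x y ^ 2) -
          (1 / ‖γ x - γ y‖ ^ 2 - Kf γ x y)) = 4 := by
        intro x hx
        rw [← hinner x hx]
        congr 1; funext y; ring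
      rw [setIntegral_congr_fun measurableSet_Icc h3]
      simp
    rw [h2] at h1
    linarith
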